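/- For the Bernstein case with all weights 1, 1 − h_k = (h_k/h_{k-1}) · (k(1−t))/(t(n−k+1)) for 1 ≤ k ≤ n and t ∈ (0,1), where h_k := B^n_k(t)/Σ_{j≤k} B^n_j(t). -/

import Mathlib

open Finset

/-- The Bernstein polynomial `B^n_k` evaluated at `t`. -/
def bern (n k : ℕ) (t : ℝ) : ℝ := (n.choose k : ℝ) * t ^ k * (1 - t) ^ (n - k)

theorem stmt16 (n : ℕ) (t : ℝ) (ht : t ∈ Set.Ioo (0 : ℝ) 1)
    (h : ℕ → ℝ)
    (hh : ∀ k ≤ n, h k = bern n k t / ∑ j ∈ range (k + 1), bern n j t)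
    (k : ℕ) (hk1 : 1 ≤ k) (hkn : k ≤ n) :
    1 - h k = (h k / h (k - 1)) *
      (((k : ℝ) * (1 - t)) / (t * ((n - k + 1 : ℕ) : ℝ))) := by
  obtain ⟨ht0, ht1⟩ := ht
  obtain ⟨m, rfl⟩ : ∃ m, k = m + 1 := ⟨k - 1, by omega⟩
  obtain ⟨d, rfl⟩ : ∃ d, n = m + 1 + d := ⟨n - (m + 1), by omega⟩
  have hs : 0 < 1 - t := by linarith
  have hpos : ∀ j ≤ m + 1 + d, 0 < bern (m + 1 + d) j t := by
    intro j hj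
    have : 0 < (m + 1 + d).choose j := Nat.choose_pos hj
    unfold bern
    positivity
  have e1 : m + 1 - 1 = m := by omega
  have e2 : m + 1 + d - (m + 1) + 1 = d + 1 := by omega
  rw [e1, e2, hh (m + 1) hkn, hh m (by omega), sum_range_succ _ (m + 1)]
  have hP : 0 < ∑ j ∈ range (m + 1), bern (m + 1 + d) j t := by
    apply sum_pos
    · intro j hj
      apply hpos
      have := mem_range.1 hj
      omega
    · exact ⟨0, by simp⟩
  have ha := hpos m (by omega)
  have hb := hpos (m + 1) (by omega)
  have key : bern (m + 1 + d) (m + 1) t * (((m + 1 : ℕ) : ℝ) * (1 - t))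
      = bern (m + 1 + d) m t * (t * ((d + 1 : ℕ) : ℝ)) := by
    have hc := Nat.choose_succ_right_eq (m + 1 + d) m
    have e3 : m + 1 + d - m = d + 1 := by omega
    have e4 : m + 1 + d - (m + 1) = d := by omega
    rw [e3] at hc
    have hc' : ((m + 1 + d).choose (m + 1) : ℝ) * ((m + 1 : ℕ) : ℝ)
        = ((m + 1 + d).choose m : ℝ) * ((d + 1 : ℕ) : ℝ) := by exact_mod_cast hc
    unfold bern
    rw [e3, e4, pow_succ, pow_succ]
    linear_combination (t ^ m * t * (1 - t) ^ d * (1 - t)) * hc'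
  have hd : (0 : ℝ) < ((d + 1 : ℕ) : ℝ) := by positivity
  generalize (∑ j ∈ range (m + 1), bern (m + 1 + d) j t) = P at *
  generalize bern (m + 1 + d) (m + 1) t = b at *
  generalize bern (m + 1 + d) m t = a at *
  generalize ((d + 1 : ℕ) : ℝ) = D at *
  generalize ((m + 1 : ℕ) : ℝ) = M at *
  have hPb : P + b ≠ 0 := by positivity
  field_simp
  linear_combination (-P) * key
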